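/- arXiv:1208.1413 — 2 statements merged into one kernel-verified Lean document; each statement's English description precedes it below -/
import Mathlib

section
/- Let β > 1 with β ∉ ℤ, let A = {0,1,…,⌊β⌋}, and let (t_j)_{j≥1} be the quasi-greedy (infinite Rényi) expansion of 1 in base β, i.e., t_j ∈ A for all j, Σ_{j=1}^∞ t_j/β^j = 1, for every k ≥ 1 the shifted sequence (t_{k+j})_{j≥1} is lexicographically ≤ (t_j)_{j≥1}, and t_j ≠ 0 for infinitely many j. Assume (t_j) is NOT of the form (m, m, …, m, p)^ω (a purely periodic sequence consisting of a block of m's followed by a single digit p with 0 ≤ p < m). Then there exists a nonempty open interval I ⊂ (0,1) such that no x ∈ I has an optimal (β,A)-representation. -/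
/-- A `(γ, B)`-representation of `x`: a sequence of digits `b i ∈ B` (here `b i` is the
digit `b_{i+1}` of the paper, i.e. sequences are 0-indexed) with `x = ∑_{i ≥ 1} b_i / γ^i`. -/
def IsRep (γ : ℝ) (B : Set ℝ) (b : ℕ → ℝ) (x : ℝ) : Prop :=
  (∀ i, b i ∈ B) ∧ HasSum (fun i : ℕ => b i / γ ^ (i + 1)) x

/-- `J_{γ,B}`: the set of real numbers admitting a `(γ,B)`-representation. -/
def RepSet (γ : ℝ) (B : Set ℝ) : Set ℝ := {x | ∃ b, IsRep γ B b x}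

/-- A `(γ,B)`-representation `c` of `x` is optimal if its partial sums approximate `x`
at least as well as those of any other `(γ,B)`-representation of `x`. -/
def IsOptimalRep (γ : ℝ) (B : Set ℝ) (c : ℕ → ℝ) (x : ℝ) : Prop :=
  IsRep γ B c x ∧ ∀ b : ℕ → ℝ, IsRep γ B b x → ∀ n : ℕ, 1 ≤ n →
    |x - ∑ i ∈ Finset.range n, c i / γ ^ (i + 1)| ≤
      |x - ∑ i ∈ Finset.range n, b i / γ ^ (i + 1)|

/-- The digit alphabet `{0, 1, …, M}` as a set of reals. -/
def digitSet (M : ℤ) : Set ℝ := (fun k : ℤ => (k : ℝ)) '' Set.Icc 0 M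


/-! All tails of `(t_j)` have value at most `1`, and a tail of value `1` is `(t_j)` itself.  If
`(t_j)` does not have the form `(M,…,M,p)^ω`, there are therefore arbitrarily large `k` for which
`t_k < M` and the tail after `t_k` has value less than `1`.  Increasing the last digit of
`t_1 … t_k` by one gives a word of value `s` with `1 < s < 1 + β^(-k)`.  For `x` slightly above
`s/β`, a representation which is optimal after one digit starts with `1`, and closeness of `x` to
`1/β` forces its next `k` digits to be `0`.  The word `0 t_1 … (t_k + 1)` has value `s/β`, which
lies between `1/β` and `x`, and so approximates `x` better after `k + 1` digits. -/

/-! ### Representations over the digits `{0, …, M}` -/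

/-- The orbit of `y` under the `β`-transformation `z ↦ {β z}`; its `n`-th point is the rescaled
remainder of the greedy expansion of `y` after `n` digits. -/
noncomputable def betaOrbit (β y : ℝ) : ℕ → ℝ
  | 0 => y
  | n + 1 => Int.fract (β * betaOrbit β y n)

lemma betaOrbit_mem_Ico {β y : ℝ} (hy : y ∈ Set.Ico (0 : ℝ) 1) (n : ℕ) :
    betaOrbit β y n ∈ Set.Ico (0 : ℝ) 1 := by
  cases n with
  | zero => exact hy
  | succ n => exact ⟨Int.fract_nonneg _, Int.fract_lt_one _⟩

lemma sum_floor_betaOrbit {β : ℝ} (hβ : β ≠ 0) (y : ℝ) (n : ℕ) :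
    ∑ i ∈ Finset.range n, (⌊β * betaOrbit β y i⌋ : ℝ) / β ^ (i + 1) =
      y - betaOrbit β y n / β ^ n := by
  induction n with
  | zero => simp [betaOrbit]
  | succ n ih =>
    rw [Finset.sum_range_succ, ih, betaOrbit, Int.fract]
    field_simp
    ring

lemma tendsto_div_pow_atTop_zero {β : ℝ} (hβ : 1 < β) (z : ℝ) :
    Filter.Tendsto (fun n : ℕ => z / β ^ n) Filter.atTop (nhds 0) :=
  (tendsto_pow_atTop_atTop_of_one_lt hβ).const_div_atTop z

lemma exists_isRep_digitSet {β : ℝ} {M : ℤ} (hβ : 1 < β) (hM : β ≤ M + 1) {y : ℝ}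
    (hy : y ∈ Set.Ico (0 : ℝ) 1) : ∃ b, IsRep β (digitSet M) b y := by
  have hβ0 : 0 < β := by linarith
  have hdigit (n : ℕ) : ⌊β * betaOrbit β y n⌋ ∈ Set.Icc 0 M := by
    obtain ⟨h0, h1⟩ := betaOrbit_mem_Ico (β := β) hy n
    refine ⟨Int.floor_nonneg.mpr (by positivity), Int.lt_add_one_iff.mp (Int.floor_lt.mpr ?_)⟩
    push_cast
    nlinarith
  refine ⟨fun n => ⌊β * betaOrbit β y n⌋, fun i => ⟨_, hdigit i, rfl⟩, ?_⟩
  have hnonneg (i : ℕ) : 0 ≤ (⌊β * betaOrbit β y i⌋ : ℝ) / β ^ (i + 1) :=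
    div_nonneg (mod_cast (hdigit i).1) (by positivity)
  have hremainder : Filter.Tendsto (fun n => betaOrbit β y n / β ^ n) Filter.atTop (nhds 0) := by
    refine squeeze_zero (fun n => div_nonneg (betaOrbit_mem_Ico hy n).1 (by positivity))
      (fun n => ?_) (tendsto_div_pow_atTop_zero hβ 1)
    gcongr
    exact (betaOrbit_mem_Ico hy n).2.le
  rw [hasSum_iff_tendsto_nat_of_nonneg hnonneg]
  simp_rw [sum_floor_betaOrbit hβ0.ne']
  simpa using hremainder.const_sub y

lemma IsRep.prepend {γ : ℝ} {B : Set ℝ} {n : ℕ} {p b : ℕ → ℝ} {y : ℝ}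
    (hp : ∀ i < n, p i ∈ B) (hb : IsRep γ B b y) :
    IsRep γ B (fun i => if i < n then p i else b (i - n))
      (∑ i ∈ Finset.range n, p i / γ ^ (i + 1) + y / γ ^ n) := by
  refine ⟨fun i => ?_, ?_⟩
  · dsimp only
    split_ifs with hi
    exacts [hp i hi, hb.1 _]
  · have hprefix : ∑ i ∈ Finset.range n, p i / γ ^ (i + 1) =
        ∑ i ∈ Finset.range n, (if i < n then p i else b (i - n)) / γ ^ (i + 1) :=
      Finset.sum_congr rfl fun i hi => by rw [if_pos (Finset.mem_range.mp hi)]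
    rw [hprefix, add_comm,
      ← hasSum_nat_add_iff (f := fun i => (if i < n then p i else b (i - n)) / γ ^ (i + 1))]
    refine (hb.2.div_const (γ ^ n)).congr_fun fun i => ?_
    rw [if_neg (by lia), Nat.add_sub_cancel, div_div, ← pow_add, add_right_comm]

lemma nonneg_of_mem_digitSet {M : ℤ} {z : ℝ} (hz : z ∈ digitSet M) : 0 ≤ z := by
  obtain ⟨k, hk, rfl⟩ := hz
  exact Int.cast_nonneg hk.1

lemma one_le_of_mem_digitSet {M : ℤ} {z : ℝ} (hz : z ∈ digitSet M) (hz0 : z ≠ 0) : 1 ≤ z := by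
  obtain ⟨k, hk, rfl⟩ := hz
  have hk0 : k ≠ 0 := by simpa using hz0
  exact Int.cast_one_le_of_pos (lt_of_le_of_ne hk.1 hk0.symm)

lemma IsRep.sum_le {β : ℝ} {M : ℤ} {c : ℕ → ℝ} {x : ℝ} (hβ : 0 ≤ β)
    (hc : IsRep β (digitSet M) c x) (s : Finset ℕ) : ∑ i ∈ s, c i / β ^ (i + 1) ≤ x :=
  sum_le_hasSum s (fun i _ => div_nonneg (nonneg_of_mem_digitSet (hc.1 i)) (by positivity)) hc.2

lemma IsRep.sum_range_eq_of_lt {β : ℝ} {M : ℤ} {c : ℕ → ℝ} {x : ℝ} {m n : ℕ} (hβ : 1 ≤ β)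
    (hmn : m ≤ n) (hc : IsRep β (digitSet M) c x)
    (hx : x < ∑ i ∈ Finset.range m, c i / β ^ (i + 1) + 1 / β ^ n) :
    ∑ i ∈ Finset.range n, c i / β ^ (i + 1) = ∑ i ∈ Finset.range m, c i / β ^ (i + 1) := by
  symm
  refine Finset.sum_subset (Finset.range_mono hmn) fun i hin him => ?_
  suffices c i = 0 by rw [this, zero_div]
  by_contra hci
  have hterm : 1 / β ^ n ≤ c i / β ^ (i + 1) := by
    have hdigit : 1 ≤ c i := one_le_of_mem_digitSet (hc.1 i) hci
    have hin : i + 1 ≤ n := Finset.mem_range.mp hin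
    gcongr
  have hsum := hc.sum_le (by linarith) (insert i (Finset.range m))
  rw [Finset.sum_insert him] at hsum
  linarith

lemma IsOptimalRep.sum_range_le {β : ℝ} {M : ℤ} {c p : ℕ → ℝ} {x : ℝ} {n : ℕ} (hβ : 1 < β)
    (hM : β ≤ M + 1) (hc : IsOptimalRep β (digitSet M) c x)
    (hp : ∀ i < n, p i ∈ digitSet M)
    (hle : ∑ i ∈ Finset.range n, p i / β ^ (i + 1) ≤ x)
    (hlt : x < ∑ i ∈ Finset.range n, p i / β ^ (i + 1) + 1 / β ^ n) :
    ∑ i ∈ Finset.range n, p i / β ^ (i + 1) ≤ ∑ i ∈ Finset.range n, c i / β ^ (i + 1) := by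
  rcases Nat.eq_zero_or_pos n with rfl | hn
  · simp
  have hβ0 : 0 < β := by linarith
  set s := ∑ i ∈ Finset.range n, p i / β ^ (i + 1) with hs
  have hy : (x - s) * β ^ n ∈ Set.Ico (0 : ℝ) 1 :=
    ⟨mul_nonneg (sub_nonneg.mpr hle) (by positivity),
      (lt_div_iff₀ (by positivity)).mp (by linarith)⟩
  obtain ⟨b, hb⟩ := exists_isRep_digitSet hβ hM hy
  have hrep := hb.prepend hp
  rw [← hs, mul_div_cancel_right₀ _ (by positivity), add_sub_cancel] at hrep
  have hprefix : ∑ i ∈ Finset.range n, (if i < n then p i else b (i - n)) / β ^ (i + 1) = s :=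
    Finset.sum_congr rfl fun i hi => by rw [if_pos (Finset.mem_range.mp hi)]
  have hdist := hc.2 _ hrep n hn
  rw [hprefix, abs_of_nonneg (sub_nonneg.mpr hle),
    abs_of_nonneg (sub_nonneg.mpr (hc.1.sum_le hβ0.le _))] at hdist
  linarith

lemma IsOptimalRep.first_digit_eq_one {β : ℝ} {M : ℤ} {c : ℕ → ℝ} {x : ℝ} (hβ : 1 < β)
    (hM : β ≤ M + 1) (hx : x ∈ Set.Ico (1 / β) (2 / β)) (hc : IsOptimalRep β (digitSet M) c x) :
    c 0 = 1 := by
  have hβ0 : 0 < β := by linarith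
  have hM1 : 1 ≤ M := by
    have : (0 : ℝ) < M := by linarith
    exact mod_cast this
  have hlower : 1 / β ≤ c 0 / β := by
    simpa using hc.sum_range_le (n := 1) (p := fun _ => 1) hβ hM
      (fun _ _ => ⟨1, ⟨zero_le_one, hM1⟩, Int.cast_one⟩) (by simpa using hx.1)
      (by simpa [← add_div, one_add_one_eq_two, ← one_div] using hx.2)
  have hupper : c 0 / β < 2 / β := by
    simpa using (hc.1.sum_le hβ0.le {0}).trans_lt hx.2
  obtain ⟨d, -, hd : (d : ℝ) = c 0⟩ := hc.1.1 0
  rw [div_le_div_iff_of_pos_right hβ0, ← hd] at hlower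
  rw [div_lt_div_iff_of_pos_right hβ0, ← hd] at hupper
  have hd1 : 1 ≤ d := mod_cast hlower
  have hd2 : d < 2 := mod_cast hupper
  rw [← hd, show d = 1 by lia, Int.cast_one]

theorem not_exists_isOptimalRep_of_one_lt_sum {β : ℝ} {M : ℤ} {p : ℕ → ℝ} {k : ℕ} {s x : ℝ}
    (hβ : 1 < β) (hM : β ≤ M + 1) (hp : ∀ i < k, p i ∈ digitSet M)
    (hps : ∑ i ∈ Finset.range k, p i / β ^ (i + 1) = s) (hs : 1 < s)
    (hx : x ∈ Set.Ico (s / β) (1 / β + 1 / β ^ (k + 1))) :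
    ¬ ∃ c : ℕ → ℝ, IsOptimalRep β (digitSet M) c x := by
  rintro ⟨c, hc⟩
  have hβ0 : 0 < β := by linarith
  have hsβ : 1 / β < s / β := by gcongr
  have hpow : 1 / β ^ (k + 1) ≤ 1 / β :=
    one_div_le_one_div_of_le hβ0 (le_self_pow₀ hβ.le k.succ_ne_zero)
  have hx2 : x < 2 / β := by
    rw [← one_add_one_eq_two, add_div]
    linarith [hx.2]
  have hc0 : ∑ i ∈ Finset.range 1, c i / β ^ (i + 1) = 1 / β := by
    simp [hc.first_digit_eq_one hβ hM ⟨hsβ.le.trans hx.1, hx2⟩]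
  have hcsum : ∑ i ∈ Finset.range (k + 1), c i / β ^ (i + 1) = 1 / β := by
    rw [hc.1.sum_range_eq_of_lt hβ.le (Nat.le_add_left 1 k) (hc0.symm ▸ hx.2), hc0]
  let w : ℕ → ℝ := fun i => Nat.casesOn i 0 p
  have hw : ∀ i < k + 1, w i ∈ digitSet M := by
    rintro (_ | i) hi
    · have hM0 : (0 : ℝ) < M := by linarith
      exact ⟨0, ⟨le_rfl, mod_cast hM0.le⟩, Int.cast_zero⟩
    · exact hp i (Nat.lt_of_succ_lt_succ hi)
  have hwsum : ∑ i ∈ Finset.range (k + 1), w i / β ^ (i + 1) = s / β := by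
    rw [Finset.sum_range_succ', ← hps, Finset.sum_div]
    simp [w, pow_succ, div_div]
  have hcompare := hc.sum_range_le hβ hM hw (hwsum.symm ▸ hx.1) (by rw [hwsum]; linarith [hx.2])
  rw [hwsum, hcsum] at hcompare
  exact hcompare.not_gt hsβ

/-! ### Tails of integer digit sequences -/

/-- The value in base `β` of the digit sequence `(t_{k+1}, t_{k+2}, …)`, in the paper's indexing,
which is the rescaled remainder of `(t_j)` after its first `k` digits.  It is `0` when that series
does not converge. -/
noncomputable def digitTail (β : ℝ) (t : ℕ → ℤ) (k : ℕ) : ℝ :=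
  ∑' j, (t (k + j) : ℝ) / β ^ (j + 1)

lemma summable_digits_shift {β : ℝ} {t : ℕ → ℤ} (hβ : β ≠ 0)
    (ht : Summable fun j => (t j : ℝ) / β ^ (j + 1)) (k : ℕ) :
    Summable fun j => (t (k + j) : ℝ) / β ^ (j + 1) := by
  refine (((summable_nat_add_iff k).mpr ht).mul_right (β ^ k)).congr fun j => ?_
  rw [add_comm k j]
  field_simp
  ring

lemma digitTail_eq_sum_add {β : ℝ} {t : ℕ → ℤ} (hβ : β ≠ 0)
    (ht : Summable fun j => (t j : ℝ) / β ^ (j + 1)) (k n : ℕ) :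
    digitTail β t k =
      ∑ i ∈ Finset.range n, (t (k + i) : ℝ) / β ^ (i + 1) + digitTail β t (k + n) / β ^ n := by
  rw [digitTail, ← (summable_digits_shift hβ ht k).sum_add_tsum_nat_add n, digitTail,
    ← tsum_div_const]
  congr 1
  refine tsum_congr fun j => ?_
  rw [div_div, ← pow_add, add_assoc k n j, add_comm n j, add_right_comm]

lemma hasSum_const_div_pow_succ {β : ℝ} (hβ : 1 < β) (z : ℝ) :
    HasSum (fun j : ℕ => z / β ^ (j + 1)) (z / (β - 1)) := by
  have hβ0 : 0 < β := by linarith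
  have hβ1 : β - 1 ≠ 0 := by linarith
  have hgeom := (hasSum_geometric_of_lt_one (inv_nonneg.mpr hβ0.le)
    (inv_lt_one_of_one_lt₀ hβ)).mul_left (z / β)
  have hvalue : z / β * (1 - β⁻¹)⁻¹ = z / (β - 1) := by field_simp
  rw [hvalue] at hgeom
  refine hgeom.congr_fun fun j => ?_
  rw [inv_pow, pow_succ]
  field_simp

lemma digitTail_of_forall_eq {β : ℝ} (hβ : 1 < β) {t : ℕ → ℤ} {k : ℕ} {z : ℤ}
    (h : ∀ j, t (k + j) = z) : digitTail β t k = z / (β - 1) := by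
  simp_rw [digitTail, h]
  exact (hasSum_const_div_pow_succ hβ _).tsum_eq

lemma exists_block_of_forall_periodic {α : Type*} {u : ℕ → α} {a : α} {K : ℕ}
    (hK : ∃ k, K ≤ k ∧ u k ≠ a)
    (hper : ∀ k, K ≤ k → u k ≠ a → Function.Periodic u (k + 1)) :
    ∃ q, u q ≠ a ∧ ∀ j, u j = if (j + 1) % (q + 1) = 0 then u q else a := by
  classical
  obtain ⟨k, hKk, hk⟩ := hK
  have hmul : Function.Periodic u (K * (k + 1)) := (hper k hKk hk).nat_mul K
  have hperAll (q : ℕ) (hq : u q ≠ a) : Function.Periodic u (q + 1) := by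
    intro j
    have hlate : u (q + K * (k + 1)) ≠ a := by rwa [hmul q]
    calc u (j + (q + 1)) = u (j + (q + 1) + K * (k + 1)) := (hmul _).symm
      _ = u (j + (q + K * (k + 1) + 1)) := by congr 1; ring
      _ = u j := hper _ (by nlinarith) hlate j
  have hex : ∃ q, u q ≠ a := ⟨k, hk⟩
  refine ⟨Nat.find hex, Nat.find_spec hex, fun j => ?_⟩
  set q := Nat.find hex
  rw [← (hperAll q (Nat.find_spec hex)).map_mod_nat j]
  split_ifs with hj
  · rw [Nat.succ_mod_succ_eq_zero_iff.mp hj]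
  · have hjq : j % (q + 1) < q := by
      have := Nat.mod_lt j q.succ_pos
      have : j % (q + 1) ≠ q := fun h => hj (Nat.succ_mod_succ_eq_zero_iff.mpr h)
      lia
    exact not_not.mp (Nat.find_min hex hjq)

/-! ### The quasi-greedy expansion of one -/

/-- `t` is the quasi-greedy (infinite Rényi) expansion of `1` in base `β`, with `t j` the digit
`t_{j+1}` of the paper.  No alphabet is fixed: the digits are natural numbers, encoded as
nonnegative integers, and `IsQuasiGreedy.digit_le` places them in every `{0, …, M}` with
`β ≤ M + 1`. -/
structure IsQuasiGreedy (β : ℝ) (t : ℕ → ℤ) : Prop where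
  nonneg : ∀ j, 0 ≤ t j
  hasSum : HasSum (fun j : ℕ => (t j : ℝ) / β ^ (j + 1)) 1
  shift_le : ∀ k : ℕ, 1 ≤ k →
    (∀ j, t (k + j) = t j) ∨ ∃ j, (∀ i < j, t (k + i) = t i) ∧ t (k + j) < t j
  not_eventually_zero : ∀ N : ℕ, ∃ j, N ≤ j ∧ t j ≠ 0

namespace IsQuasiGreedy

variable {β : ℝ} {t : ℕ → ℤ}

lemma digitTail_zero (ht : IsQuasiGreedy β t) : digitTail β t 0 = 1 := by
  simpa [digitTail] using ht.hasSum.tsum_eq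

lemma digitTail_pos (hβ : 0 < β) (ht : IsQuasiGreedy β t) (k : ℕ) : 0 < digitTail β t k := by
  obtain ⟨j, hkj, hj⟩ := ht.not_eventually_zero k
  obtain ⟨i, rfl⟩ := Nat.exists_eq_add_of_le hkj
  refine (summable_digits_shift hβ.ne' ht.hasSum.summable k).tsum_pos
    (fun j => div_nonneg (mod_cast ht.nonneg _) (by positivity)) i (div_pos ?_ (by positivity))
  exact mod_cast lt_of_le_of_ne (ht.nonneg _) hj.symm

lemma digit_le_first (ht : IsQuasiGreedy β t) (k : ℕ) : t k ≤ t 0 := by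
  rcases Nat.eq_zero_or_pos k with rfl | hk
  · exact le_rfl
  rcases ht.shift_le k hk with h | ⟨_ | j, heq, hlt⟩
  exacts [(h 0).le, hlt.le, (heq 0 j.succ_pos).le]

lemma digit_lt (hβ : 0 < β) (ht : IsQuasiGreedy β t) (k : ℕ) : (t k : ℝ) < β := by
  have hfirst := digitTail_eq_sum_add hβ.ne' ht.hasSum.summable 0 1
  have hpos := ht.digitTail_pos hβ (0 + 1)
  have hle : (t k : ℝ) ≤ t 0 := mod_cast ht.digit_le_first k
  simp only [ht.digitTail_zero, Finset.sum_range_one, zero_add, pow_one] at hfirst hpos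
  field_simp at hfirst
  linarith

lemma digit_le (hβ : 0 < β) (ht : IsQuasiGreedy β t) {M : ℤ} (hM : β ≤ M + 1) (k : ℕ) :
    t k ≤ M := by
  have hlt := (ht.digit_lt hβ k).trans_le hM
  exact Int.lt_add_one_iff.mp (mod_cast hlt)

lemma bddAbove_range_digitTail (hβ : 1 < β) (ht : IsQuasiGreedy β t) :
    BddAbove (Set.range (digitTail β t)) := by
  have hβ0 : 0 < β := by linarith
  have hgeom := hasSum_const_div_pow_succ hβ (t 0)
  refine ⟨t 0 / (β - 1), Set.forall_mem_range.mpr fun k => ?_⟩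
  rw [← hgeom.tsum_eq]
  refine (summable_digits_shift hβ0.ne' ht.hasSum.summable k).tsum_le_tsum (fun j => ?_)
    hgeom.summable
  gcongr
  exact ht.digit_le_first _

lemma digitTail_sub_one_lt_of_lex (hβ : 0 < β) (ht : IsQuasiGreedy β t) {k j : ℕ}
    (heq : ∀ i < j, t (k + i) = t i) (hlt : t (k + j) < t j) :
    digitTail β t k - 1 < (digitTail β t (k + (j + 1)) - 1) / β ^ (j + 1) := by
  have hshift := digitTail_eq_sum_add hβ.ne' ht.hasSum.summable k (j + 1)
  have hself := digitTail_eq_sum_add hβ.ne' ht.hasSum.summable 0 (j + 1)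
  rw [ht.digitTail_zero] at hself
  simp only [zero_add, Finset.sum_range_succ] at hshift hself
  have hprefix : ∑ i ∈ Finset.range j, (t (k + i) : ℝ) / β ^ (i + 1) =
      ∑ i ∈ Finset.range j, (t i : ℝ) / β ^ (i + 1) :=
    Finset.sum_congr rfl fun i hi => by rw [heq i (Finset.mem_range.mp hi)]
  have hdigit : (t (k + j) : ℝ) / β ^ (j + 1) ≤ t j / β ^ (j + 1) - 1 / β ^ (j + 1) := by
    rw [← sub_div]
    gcongr
    exact mod_cast Int.le_sub_one_of_lt hlt
  have hpos : 0 < digitTail β t (j + 1) / β ^ (j + 1) :=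
    div_pos (ht.digitTail_pos hβ _) (by positivity)
  rw [sub_div]
  linarith

lemma shift_eq_or_digitTail_sub_one_lt (hβ : 0 < β) (ht : IsQuasiGreedy β t) (k : ℕ) :
    (∀ j, t (k + j) = t j) ∨
      ∃ j, digitTail β t k - 1 < (digitTail β t (k + (j + 1)) - 1) / β ^ (j + 1) := by
  rcases Nat.eq_zero_or_pos k with rfl | hk
  · exact .inl fun j => by rw [zero_add]
  · exact (ht.shift_le k hk).imp_right fun ⟨j, heq, hlt⟩ =>
      ⟨j, ht.digitTail_sub_one_lt_of_lex hβ heq hlt⟩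

lemma digitTail_le_one (hβ : 1 < β) (ht : IsQuasiGreedy β t) (k : ℕ) : digitTail β t k ≤ 1 := by
  have hβ0 : 0 < β := by linarith
  have hbdd := ht.bddAbove_range_digitTail hβ
  set S := ⨆ n, digitTail β t n
  have hle (n : ℕ) : digitTail β t n ≤ S := le_ciSup hbdd n
  have hS1 : 1 ≤ S := ht.digitTail_zero ▸ hle 0
  -- The excess over `1` is contracted by the factor `1 / β`, so its supremum vanishes.
  have hcontract : S ≤ 1 + (S - 1) / β := by
    refine ciSup_le fun n => ?_
    rcases ht.shift_eq_or_digitTail_sub_one_lt hβ0 n with hshift | ⟨j, hj⟩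
    · have hone : digitTail β t n = 1 := by
        simpa [digitTail, hshift] using ht.hasSum.tsum_eq
      rw [hone]
      exact le_add_of_nonneg_right (div_nonneg (by linarith) hβ0.le)
    · rw [← sub_le_iff_le_add']
      calc digitTail β t n - 1 ≤ (digitTail β t (n + (j + 1)) - 1) / β ^ (j + 1) := hj.le
        _ ≤ (S - 1) / β ^ (j + 1) := by gcongr; exact hle _
        _ ≤ (S - 1) / β :=
          div_le_div_of_nonneg_left (by linarith) hβ0 (le_self_pow₀ hβ.le j.succ_ne_zero)
  rw [← sub_le_iff_le_add', le_div_iff₀ hβ0] at hcontract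
  nlinarith [hle k]

lemma periodic_of_digitTail_eq_one (hβ : 1 < β) (ht : IsQuasiGreedy β t) {k : ℕ}
    (hk : digitTail β t k = 1) : Function.Periodic t k := by
  have hβ0 : 0 < β := by linarith
  rcases ht.shift_eq_or_digitTail_sub_one_lt hβ0 k with h | ⟨j, hj⟩
  · exact fun j => add_comm j k ▸ h j
  · have hnonpos : (digitTail β t (k + (j + 1)) - 1) / β ^ (j + 1) ≤ 0 :=
      div_nonpos_of_nonpos_of_nonneg (sub_nonpos.mpr (ht.digitTail_le_one hβ _)) (by positivity)
    linarith

lemma exists_ge_digit_lt (hβ : 1 < β) (ht : IsQuasiGreedy β t) {M : ℤ} (hM : β < M + 1) (K : ℕ) :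
    ∃ k, K ≤ k ∧ t k < M := by
  by_contra! hmax
  have htail := digitTail_of_forall_eq (z := M) hβ (k := K)
    fun j => (ht.digit_le (by linarith) hM.le _).antisymm (hmax _ (Nat.le_add_right K j))
  have hle := ht.digitTail_le_one hβ K
  rw [htail, div_le_one (by linarith)] at hle
  linarith

lemma base_eq_of_forall_eq (hβ : 1 < β) (ht : IsQuasiGreedy β t) (h : ∀ j, t j = t 0) :
    β = (t 0 + 1 : ℤ) := by
  have hone := digitTail_of_forall_eq hβ (k := 0) fun j => (zero_add j).symm ▸ h j
  rw [ht.digitTail_zero, eq_div_iff (by linarith)] at hone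
  push_cast
  linarith

lemma exists_ge_digitTail_lt_one (hβ : 1 < β) (hβZ : ∀ n : ℤ, β ≠ n) {M : ℤ} (hM : β < M + 1)
    (ht : IsQuasiGreedy β t)
    (hblock : ¬ ∃ d : ℕ, 1 ≤ d ∧ ∃ p : ℤ, 0 ≤ p ∧ p < M ∧
      ∀ j : ℕ, t j = if (j + 1) % (d + 1) = 0 then p else M) (K : ℕ) :
    ∃ k, K ≤ k ∧ t k < M ∧ digitTail β t (k + 1) < 1 := by
  by_contra! hone
  have hdigit := ht.digit_le (by linarith) hM.le
  obtain ⟨k, hKk, hk⟩ := ht.exists_ge_digit_lt hβ hM K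
  obtain ⟨q, hq, hform⟩ := exists_block_of_forall_periodic ⟨k, hKk, hk.ne⟩ fun n hKn hn =>
    ht.periodic_of_digitTail_eq_one hβ
      ((ht.digitTail_le_one hβ _).antisymm (hone n hKn ((hdigit n).lt_of_ne hn)))
  rcases Nat.eq_zero_or_pos q with rfl | hq0
  · exact hβZ _ (ht.base_eq_of_forall_eq hβ fun j => by simpa [Nat.mod_one] using hform j)
  · exact hblock ⟨q, hq0, t q, ht.nonneg q, (hdigit q).lt_of_ne hq, hform⟩

lemma exists_word_sum_mem_Ioo (hβ : 0 < β) (ht : IsQuasiGreedy β t) {M : ℤ}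
    (hM : β ≤ M + 1) {k : ℕ} (hk : t k < M) (htail : digitTail β t (k + 1) < 1) :
    ∃ p : ℕ → ℝ, (∀ i, p i ∈ digitSet M) ∧
      ∑ i ∈ Finset.range (k + 1), p i / β ^ (i + 1) ∈ Set.Ioo 1 (1 + 1 / β ^ (k + 1)) := by
  let u : ℕ → ℤ := t + Pi.single k 1
  have hmem (i : ℕ) : u i ∈ Set.Icc 0 M := by
    have hnonneg := ht.nonneg i
    have hle := ht.digit_le hβ hM i
    rcases eq_or_ne i k with rfl | hik
    · simp only [u, Pi.add_apply, Pi.single_eq_same]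
      exact ⟨by lia, hk⟩
    · simp only [u, Pi.add_apply, Pi.single_eq_of_ne hik, add_zero]
      exact ⟨hnonneg, hle⟩
  have hincrement : ∑ i ∈ Finset.range (k + 1), (u i : ℝ) / β ^ (i + 1) =
      ∑ i ∈ Finset.range (k + 1), (t i : ℝ) / β ^ (i + 1) + 1 / β ^ (k + 1) := by
    simp [u, add_div, Finset.sum_add_distrib, Pi.single_apply, ite_div]
  refine ⟨fun i => u i, fun i => ⟨u i, hmem i, rfl⟩, ?_⟩
  have hsplit := digitTail_eq_sum_add hβ.ne' ht.hasSum.summable 0 (k + 1)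
  rw [ht.digitTail_zero] at hsplit
  simp only [zero_add] at hsplit
  have hpos : 0 < digitTail β t (k + 1) / β ^ (k + 1) :=
    div_pos (ht.digitTail_pos hβ _) (by positivity)
  have hlt : digitTail β t (k + 1) / β ^ (k + 1) < 1 / β ^ (k + 1) := by gcongr
  rw [hincrement]
  constructor <;> linarith

end IsQuasiGreedy

theorem no_optimal_interval_nonconfluent_general {β : ℝ} (hβ : 1 < β) (hβZ : ∀ n : ℤ, β ≠ n)
    {M : ℤ} (hM : β < M + 1) {t : ℕ → ℤ} (ht : IsQuasiGreedy β t)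
    (hblock : ¬ ∃ d : ℕ, 1 ≤ d ∧ ∃ p : ℤ, 0 ≤ p ∧ p < M ∧
      ∀ j : ℕ, t j = if (j + 1) % (d + 1) = 0 then p else M) :
    ∃ a b : ℝ, a < b ∧ Set.Ioo a b ⊆ Set.Ioo (0 : ℝ) 1 ∧
      ∀ x ∈ Set.Ioo a b, ¬ ∃ c : ℕ → ℝ, IsOptimalRep β (digitSet M) c x := by
  have hβ0 : 0 < β := by linarith
  obtain ⟨K, hK⟩ := Filter.eventually_atTop.mp
    ((tendsto_div_pow_atTop_zero hβ 1).eventually_lt_const (sub_pos.mpr hβ))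
  obtain ⟨k, hKk, hk, htail⟩ := ht.exists_ge_digitTail_lt_one hβ hβZ hM hblock K
  obtain ⟨p, hp, hs⟩ := ht.exists_word_sum_mem_Ioo hβ0 hM.le hk htail
  set s := ∑ i ∈ Finset.range (k + 1), p i / β ^ (i + 1) with hps
  have hpow : 1 / β ^ (k + 1 + 1) = 1 / β ^ (k + 1) / β := by rw [pow_succ, div_div]
  refine ⟨s / β, 1 / β + 1 / β ^ (k + 1 + 1), ?_, Set.Ioo_subset_Ioo ?_ ?_, fun x hx =>
    not_exists_isOptimalRep_of_one_lt_sum hβ hM.le (fun i _ => hp i) hps.symm hs.1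
      (Set.Ioo_subset_Ico_self hx)⟩
  · rw [hpow, ← add_div]
    gcongr
    exact hs.2
  · exact div_nonneg (by linarith [hs.1]) hβ0.le
  · rw [hpow, ← add_div, div_le_one hβ0]
    linarith [hK (k + 1) (by lia)]

/-- Proposition on non-confluent bases: let `β > 1`, `β ∉ ℤ`,
`A = {0,…,⌊β⌋}`, and let `(t_j)` be the quasi-greedy expansion of `1` in base `β`
(digits in `A`, `∑ t_j/β^j = 1`, every shift lexicographically `≤ (t_j)`, not eventually
zero). If `(t_j)` is not of the form `(m,…,m,p)^ω` with `0 ≤ p < m`, then there is a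
nonempty open interval `I ⊆ (0,1)` on which no point has an optimal
`(β,A)`-representation. (`t` is 0-indexed: `t j` is the digit `t_{j+1}`.) -/
theorem no_optimal_interval_nonconfluent
    (β : ℝ) (hβ : 1 < β) (hβZ : ∀ n : ℤ, β ≠ n)
    (t : ℕ → ℤ) (ht : ∀ j, 0 ≤ t j ∧ t j ≤ ⌊β⌋)
    (hsum : HasSum (fun j : ℕ => (t j : ℝ) / β ^ (j + 1)) 1)
    (hshift : ∀ k : ℕ, 1 ≤ k →
      (∀ j, t (k + j) = t j) ∨ ∃ j, (∀ i < j, t (k + i) = t i) ∧ t (k + j) < t j)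
    (hnev0 : ∀ N : ℕ, ∃ j, N ≤ j ∧ t j ≠ 0)
    (hnonconfluent : ¬ ∃ d : ℕ, 1 ≤ d ∧ ∃ m p : ℤ, 0 ≤ p ∧ p < m ∧
      ∀ j : ℕ, t j = if (j + 1) % (d + 1) = 0 then p else m) :
    ∃ a b : ℝ, a < b ∧ Set.Ioo a b ⊆ Set.Ioo (0 : ℝ) 1 ∧
      ∀ x ∈ Set.Ioo a b, ¬ ∃ c : ℕ → ℝ, IsOptimalRep β (digitSet ⌊β⌋) c x :=
  no_optimal_interval_nonconfluent_general hβ hβZ (Int.lt_floor_add_one β)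
    ⟨fun j => (ht j).1, hsum, hshift, hnev0⟩
    fun ⟨d, hd, p, hp⟩ => hnonconfluent ⟨d, hd, ⌊β⌋, p, hp⟩
end

section
/- Let β > 1 with β ∉ ℤ, let A = {0,1,…,⌊β⌋}, and let (t_j)_{j≥1} be the quasi-greedy (infinite Rényi) expansion of 1 in base β, i.e., t_j ∈ A for all j, Σ_{j=1}^∞ t_j/β^j = 1, for every k ≥ 1 the shifted sequence (t_{k+j})_{j≥1} is lexicographically ≤ (t_j)_{j≥1}, and t_j ≠ 0 for infinitely many j. Assume (t_j) is NOT of the form (m, m, …, m, p)^ω with 0 ≤ p < m (i.e., β is not confluent). Then the set of x ∈ [0,1) possessing an optimal (β,A)-representation has Lebesgue measure zero. -/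
/-!
Write `T x = fract (β x)`. Every `x ∈ [0,1)` has its greedy expansion, whose truncation after `n`
digits has error `T^n x / β^n`, so an optimal representation must be the greedy one. Being
approximated best by greedy truncations is inherited by `T x`, and every point of `[0,1)` lies in
arbitrarily short full cylinders, i.e. intervals that some `T^n` maps affinely onto `[0,1)`. Hence
one interval free of optimal points is copied, at a fixed proportion, near every point and at
arbitrarily small scales, and the Lebesgue density theorem makes the set of optimal points null.

For the interval, compare the word `1 0 … 0` with `0 t₁ … t_{d-1} (t_d + 1)`. The second has the
larger value as soon as the tail of `(t_j)` after `t_d` has value `< 1`, and then it approximates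
the points just to its right better than the greedy word `1 0 … 0` does. The digit `t_d + 1` is
allowed if `t_d < ⌊β⌋`; non-confluence provides such a `d`, and indeed infinitely many.
-/

open MeasureTheory Set Filter
open scoped Topology

theorem measure_eq_zero_of_porous {α : Type*} [PseudoMetricSpace α] [MeasurableSpace α]
    {μ : Measure α} [IsUnifLocDoublingMeasure μ] [SecondCountableTopology α] [BorelSpace α]
    [IsLocallyFiniteMeasure μ] {S : Set α} (K : ℝ)
    (hS : ∀ x ∈ S, ∀ ε > 0, ∃ w, ∃ δ ∈ Ioo 0 ε,
      x ∈ Metric.closedBall w (K * δ) ∧ Disjoint S (Metric.closedBall w δ)) :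
    μ S = 0 := by
  have density := IsUnifLocDoublingMeasure.ae_tendsto_measure_inter_div μ S K
  rw [← Measure.restrict_apply_self μ S]
  refine measure_mono_null (fun x hx ↦ ?_) (ae_iff.1 density)
  refine mem_ofPred.2 fun hdensity ↦ ?_
  choose w δ hδ hxw hdisj using fun n : ℕ ↦ hS x hx (1 / (n + 1)) Nat.one_div_pos_of_nat
  have hδ_lim : Tendsto δ atTop (𝓝[>] 0) := tendsto_nhdsWithin_iff.2
    ⟨squeeze_zero (fun n ↦ (hδ n).1.le) (fun n ↦ (hδ n).2.le)
      tendsto_one_div_add_atTop_nhds_zero_nat, .of_forall fun n ↦ (hδ n).1⟩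
  have hlim := hdensity w δ hδ_lim (.of_forall hxw)
  simp only [(hdisj _).inter_eq, measure_empty, ENNReal.zero_div] at hlim
  exact zero_ne_one (tendsto_nhds_unique tendsto_const_nhds hlim)

/-- The rescaled error `βⁿ (x - ∑_{i < n} b_i / β^(i+1))` left after spending the first `n` digits
of `b` on `x`; it is defined by its recursion, see `remainder_eq` for the closed form. -/
def remainder (β x : ℝ) (b : ℕ → ℤ) : ℕ → ℝ
  | 0 => x
  | n + 1 => β * remainder β x b n - b n

section Remainder

variable {β x : ℝ} {b : ℕ → ℤ}

theorem remainder_eq (hβ : β ≠ 0) (n : ℕ) :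
    remainder β x b n = β ^ n * (x - ∑ i ∈ Finset.range n, (b i : ℝ) / β ^ (i + 1)) := by
  induction n with
  | zero => simp [remainder]
  | succ n ih =>
    rw [remainder, ih, Finset.sum_range_succ]
    field_simp
    ring

theorem remainder_add (m n : ℕ) :
    remainder β x b (m + n) = remainder β (remainder β x b m) (fun i ↦ b (m + i)) n := by
  induction n with
  | zero => rfl
  | succ n ih => rw [← add_assoc, remainder, ih, remainder]

theorem remainder_one_add (n : ℕ) :
    remainder β x b (1 + n) = remainder β (β * x - b 0) (fun i ↦ b (1 + i)) n :=
  remainder_add 1 n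

theorem remainder_congr {b' : ℕ → ℤ} {n : ℕ} (h : ∀ i < n, b i = b' i) :
    remainder β x b n = remainder β x b' n := by
  induction n with
  | zero => rfl
  | succ n ih => rw [remainder, remainder, ih fun i hi ↦ h i (by omega), h n n.lt_succ_self]

theorem remainder_sub_remainder (y : ℝ) (n : ℕ) :
    remainder β x b n - remainder β y b n = β ^ n * (x - y) := by
  induction n with
  | zero => simp [remainder]
  | succ n ih =>
    rw [remainder, remainder, pow_succ]
    linear_combination β * ih

theorem remainder_zero_digits (n : ℕ) : remainder β x 0 n = β ^ n * x := by
  induction n with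
  | zero => simp [remainder]
  | succ n ih => simp [remainder, ih, pow_succ', mul_assoc]

theorem remainder_nonneg_of_le (hβ : 0 < β) (hb : ∀ i, 0 ≤ b i) {i n : ℕ} (hi : i ≤ n)
    (hn : 0 ≤ remainder β x b n) : 0 ≤ remainder β x b i := by
  induction hi using Nat.decreasingInduction with
  | self => exact hn
  | of_succ i _ ih =>
    have hbi : (0 : ℝ) ≤ b i := mod_cast hb i
    rw [remainder] at ih
    exact nonneg_of_mul_nonneg_right (by linarith) hβ

theorem hasSum_remainder (hβ : β ≠ 0) (h : HasSum (fun i ↦ (b i : ℝ) / β ^ (i + 1)) x) (n : ℕ) :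
    HasSum (fun i ↦ (b (n + i) : ℝ) / β ^ (i + 1)) (remainder β x b n) := by
  rw [remainder_eq hβ]
  refine (((hasSum_nat_add_iff' n).2 h).mul_left (β ^ n)).congr_fun fun i ↦ ?_
  rw [add_comm n i, add_right_comm i n 1, pow_add _ _ n]
  field_simp

theorem remainder_nonneg (hβ : 0 < β) (hb : ∀ i, 0 ≤ b i)
    (h : HasSum (fun i ↦ (b i : ℝ) / β ^ (i + 1)) x) (n : ℕ) : 0 ≤ remainder β x b n :=
  (hasSum_remainder hβ.ne' h n).nonneg fun i ↦
    div_nonneg (mod_cast hb (n + i)) (by positivity)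

theorem hasSum_const_digit (hβ : 1 < β) (M : ℝ) :
    HasSum (fun i : ℕ ↦ M / β ^ (i + 1)) (M / (β - 1)) := by
  have hβ₀ : 0 < β := by linarith
  have hβ₁ : β - 1 ≠ 0 := by linarith
  have geometric := (hasSum_geometric_of_lt_one (inv_nonneg.2 hβ₀.le)
    (inv_lt_one_of_one_lt₀ hβ)).mul_left (M / β)
  rw [show M / β * (1 - β⁻¹)⁻¹ = M / (β - 1) by field_simp] at geometric
  refine geometric.congr_fun fun i ↦ ?_
  rw [pow_succ', inv_pow, div_mul_eq_div_div, div_eq_mul_inv (M / β)]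

theorem remainder_le (hβ : 1 < β) {M : ℤ} (hb : ∀ i, b i ≤ M)
    (h : HasSum (fun i ↦ (b i : ℝ) / β ^ (i + 1)) x) (n : ℕ) :
    remainder β x b n ≤ M / (β - 1) := by
  have hβ₀ : 0 < β := by linarith
  refine hasSum_le (fun i ↦ ?_) (hasSum_remainder hβ₀.ne' h n) (hasSum_const_digit hβ M)
  gcongr
  exact hb _

theorem hasSum_of_remainder_mem_Icc (hβ : 1 < β) (hb : ∀ i, 0 ≤ b i)
    (h : ∀ᶠ n in atTop, remainder β x b n ∈ Icc 0 1) :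
    HasSum (fun i ↦ (b i : ℝ) / β ^ (i + 1)) x := by
  have hβ₀ : 0 < β := by linarith
  rw [hasSum_iff_tendsto_nat_of_nonneg
    fun i ↦ div_nonneg (mod_cast hb i) (by positivity)]
  have error_eq (n : ℕ) :
      ∑ i ∈ Finset.range n, (b i : ℝ) / β ^ (i + 1) = x - remainder β x b n / β ^ n := by
    rw [remainder_eq hβ₀.ne']
    field_simp
    ring
  have error_lim : Tendsto (fun n ↦ remainder β x b n / β ^ n) atTop (𝓝 0) :=
    squeeze_zero' (h.mono fun n hn ↦ div_nonneg hn.1 (by positivity))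
      (h.mono fun n hn ↦ div_le_div_of_nonneg_right hn.2 (by positivity))
      (tendsto_const_nhds.div_atTop (tendsto_pow_atTop_atTop_of_one_lt hβ))
  simpa only [error_eq, sub_zero] using tendsto_const_nhds.sub error_lim

end Remainder

/-- The `β`-transformation `x ↦ βx mod 1`, whose orbits generate the greedy expansions. -/
noncomputable def betaMap (β x : ℝ) : ℝ := Int.fract (β * x)

/-- The greedy digits of `x`; the `i`-th one is the paper's digit with index `i + 1`. -/
noncomputable def greedyDigit (β x : ℝ) (i : ℕ) : ℤ := ⌊β * (betaMap β)^[i] x⌋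

section BetaMap

variable {β x : ℝ} {b : ℕ → ℤ}

theorem mapsTo_betaMap (β : ℝ) : MapsTo (betaMap β) (Ico 0 1) (Ico 0 1) :=
  fun _ _ ↦ ⟨Int.fract_nonneg _, Int.fract_lt_one _⟩

theorem remainder_greedyDigit (n : ℕ) :
    remainder β x (greedyDigit β x) n = (betaMap β)^[n] x := by
  induction n with
  | zero => rfl
  | succ n ih => rw [remainder, ih, Function.iterate_succ_apply', betaMap, Int.fract, greedyDigit]

theorem greedyDigit_mem_Icc (hβ : 0 ≤ β) (hx : x ∈ Ico 0 1) (i : ℕ) :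
    greedyDigit β x i ∈ Icc 0 ⌊β⌋ := by
  have hT := (mapsTo_betaMap β).iterate i hx
  exact ⟨Int.floor_nonneg.2 (mul_nonneg hβ hT.1),
    Int.floor_le_floor (mul_le_of_le_one_right hβ hT.2.le)⟩

theorem iterate_betaMap_eq_remainder {n : ℕ} (h : ∀ i ≤ n, remainder β x b i ∈ Ico 0 1) :
    (betaMap β)^[n] x = remainder β x b n := by
  induction n with
  | zero => rfl
  | succ n ih =>
    rw [Function.iterate_succ_apply', ih fun i hi ↦ h i (by omega), betaMap,
      ← Int.fract_sub_intCast _ (b n)]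
    exact Int.fract_eq_self.2 (h (n + 1) le_rfl)

theorem iterate_betaMap_eq_pow_mul (hβ : 1 ≤ β) (hx : 0 ≤ x) {n : ℕ} (h : β ^ n * x < 1) :
    (betaMap β)^[n] x = β ^ n * x := by
  rw [← remainder_zero_digits]
  refine iterate_betaMap_eq_remainder fun i hi ↦ ?_
  rw [remainder_zero_digits]
  exact ⟨by positivity, (mul_le_mul_of_nonneg_right (pow_le_pow_right₀ hβ hi) hx).trans_lt h⟩

end BetaMap

section OptimalRepresentations

variable {β x : ℝ} {b c : ℕ → ℤ}

theorem intCast_mem_digitSet {k M : ℤ} : (k : ℝ) ∈ digitSet M ↔ k ∈ Icc 0 M :=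
  Int.cast_injective.mem_set_image

theorem exists_isRep_of_remainder_mem (hβ : 1 < β) (hb : ∀ i, b i ∈ Icc 0 ⌊β⌋) {n : ℕ}
    (hn : remainder β x b n ∈ Ico 0 1) :
    ∃ b' : ℕ → ℤ, IsRep β (digitSet ⌊β⌋) (fun i ↦ (b' i : ℝ)) x ∧
      remainder β x b' n = remainder β x b n := by
  set y := remainder β x b n
  let b' : ℕ → ℤ := fun i ↦ if i < n then b i else greedyDigit β y (i - n)
  have hb' (i : ℕ) : b' i ∈ Icc 0 ⌊β⌋ := by
    by_cases hi : i < n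
    · simpa only [b', if_pos hi] using hb i
    · simpa only [b', if_neg hi] using greedyDigit_mem_Icc (by linarith) hn (i - n)
  have head_eq : remainder β x b' n = y := remainder_congr fun i hi ↦ if_pos hi
  have tail_eq (k : ℕ) : remainder β x b' (n + k) = (betaMap β)^[k] y := by
    rw [remainder_add, head_eq, ← remainder_greedyDigit]
    exact remainder_congr fun i _ ↦ by simp [b']
  refine ⟨b', ⟨fun i ↦ intCast_mem_digitSet.2 (hb' i), ?_⟩, head_eq⟩
  refine hasSum_of_remainder_mem_Icc hβ (fun i ↦ (hb' i).1) ?_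
  filter_upwards [eventually_ge_atTop n] with m hm
  obtain ⟨k, rfl⟩ := Nat.exists_eq_add_of_le hm
  rw [tail_eq]
  exact Ico_subset_Icc_self ((mapsTo_betaMap β).iterate k hn)

theorem IsRep.remainder_nonneg {M : ℤ} (hβ : 0 < β)
    (hb : IsRep β (digitSet M) (fun i ↦ (b i : ℝ)) x) (n : ℕ) : 0 ≤ remainder β x b n :=
  _root_.remainder_nonneg hβ (fun i ↦ (intCast_mem_digitSet.1 (hb.1 i)).1) hb.2 n

theorem IsOptimalRep.remainder_le {M : ℤ} (hβ : 0 < β)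
    (hc : IsOptimalRep β (digitSet M) (fun i ↦ (c i : ℝ)) x)
    (hb : IsRep β (digitSet M) (fun i ↦ (b i : ℝ)) x) (n : ℕ) :
    remainder β x c n ≤ remainder β x b n := by
  rcases n.eq_zero_or_pos with rfl | hn
  · exact le_rfl
  · rw [← abs_of_nonneg (hc.1.remainder_nonneg hβ n), ← abs_of_nonneg (hb.remainder_nonneg hβ n),
      remainder_eq hβ.ne', remainder_eq hβ.ne', abs_mul, abs_mul]
    exact mul_le_mul_of_nonneg_left (hc.2 _ hb n hn) (abs_nonneg _)

theorem IsOptimalRep.remainder_eq_iterate_betaMap (hβ : 1 < β) (hx : x ∈ Ico 0 1)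
    (hc : IsOptimalRep β (digitSet ⌊β⌋) (fun i ↦ (c i : ℝ)) x) (n : ℕ) :
    remainder β x c n = (betaMap β)^[n] x := by
  have hβ₀ : 0 < β := by linarith
  have greedy_isRep : IsRep β (digitSet ⌊β⌋) (fun i ↦ (greedyDigit β x i : ℝ)) x :=
    ⟨fun i ↦ intCast_mem_digitSet.2 (greedyDigit_mem_Icc hβ₀.le hx i),
      hasSum_of_remainder_mem_Icc hβ (fun i ↦ (greedyDigit_mem_Icc hβ₀.le hx i).1) <|
        .of_forall fun n ↦ remainder_greedyDigit (β := β) (x := x) n ▸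
          Ico_subset_Icc_self ((mapsTo_betaMap β).iterate n hx)⟩
  refine (iterate_betaMap_eq_remainder fun i _ ↦ ⟨hc.1.remainder_nonneg hβ₀ i, ?_⟩).symm
  calc remainder β x c i ≤ (betaMap β)^[i] x :=
        remainder_greedyDigit (β := β) (x := x) i ▸ hc.remainder_le hβ₀ greedy_isRep i
    _ < 1 := ((mapsTo_betaMap β).iterate i hx).2

end OptimalRepresentations

/-- The points of `[0,1)` which, for every `n`, are approximated at least as well by the first `n`
greedy digits as by any `n` digits that leave a rescaled error in `[0,1)`. -/
def greedyOptimalSet (β : ℝ) : Set ℝ :=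
  {x ∈ Ico 0 1 | ∀ b : ℕ → ℤ, (∀ i, b i ∈ Icc 0 ⌊β⌋) → ∀ n, remainder β x b n ∈ Ico 0 1 →
    (betaMap β)^[n] x ≤ remainder β x b n}

section GreedyOptimalSet

variable {β : ℝ}

theorem mem_greedyOptimalSet_of_isOptimalRep (hβ : 1 < β) {x : ℝ} (hx : x ∈ Ico 0 1) {c : ℕ → ℝ}
    (hc : IsOptimalRep β (digitSet ⌊β⌋) c x) : x ∈ greedyOptimalSet β := by
  choose c' _ hc' using hc.1.1
  obtain rfl : (fun i ↦ (c' i : ℝ)) = c := funext hc'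
  refine ⟨hx, fun b hb n hn ↦ ?_⟩
  obtain ⟨b', hb'_rep, hb'_eq⟩ := exists_isRep_of_remainder_mem hβ hb hn
  rw [← hc.remainder_eq_iterate_betaMap hβ hx, ← hb'_eq]
  exact hc.remainder_le (by linarith) hb'_rep n

theorem mapsTo_betaMap_greedyOptimalSet (hβ : 0 ≤ β) :
    MapsTo (betaMap β) (greedyOptimalSet β) (greedyOptimalSet β) := by
  rintro x ⟨hx, hx_best⟩
  refine ⟨mapsTo_betaMap β hx, fun b hb n hn ↦ ?_⟩
  let b' : ℕ → ℤ
    | 0 => greedyDigit β x 0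
    | i + 1 => b i
  have hb' : ∀ i, b' i ∈ Icc 0 ⌊β⌋
    | 0 => greedyDigit_mem_Icc hβ hx 0
    | i + 1 => hb i
  have tail_eq : remainder β x b' (1 + n) = remainder β (betaMap β x) b n := by
    rw [remainder_one_add]
    exact remainder_congr fun i _ ↦ by rw [add_comm]
  have hx_le := hx_best b' hb' (1 + n) (tail_eq ▸ hn)
  rwa [tail_eq, add_comm, Function.iterate_succ_apply] at hx_le

end GreedyOptimalSet

/-- `x` lies in a full cylinder of order `n`: an interval of length `β⁻ⁿ` inside `[0,1)` which the
`n`-th iterate of the `β`-transformation maps affinely onto `[0,1)`. The point of the interval that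
is sent to `θ` is written relative to `x`, which itself is sent to `(betaMap β)^[n] x`. -/
def InFullCylinder (β : ℝ) (n : ℕ) (x : ℝ) : Prop :=
  ∀ θ ∈ Ico (0 : ℝ) 1, x + (θ - (betaMap β)^[n] x) / β ^ n ∈ Ico (0 : ℝ) 1 ∧
    (betaMap β)^[n] (x + (θ - (betaMap β)^[n] x) / β ^ n) = θ

section FullCylinders

variable {β x : ℝ}

theorem inFullCylinder_zero : InFullCylinder β 0 x := fun θ hθ ↦ by simpa using hθ

theorem InFullCylinder.add {m n : ℕ} (hn : InFullCylinder β n x)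
    (hm : InFullCylinder β m ((betaMap β)^[n] x)) : InFullCylinder β (m + n) x := by
  intro θ hθ
  obtain ⟨hη, hη_iter⟩ := hm θ hθ
  obtain ⟨hz, hz_iter⟩ := hn _ hη
  have hz_eq : x + (θ - (betaMap β)^[m + n] x) / β ^ (m + n) =
      x + ((betaMap β)^[n] x + (θ - (betaMap β)^[m] ((betaMap β)^[n] x)) / β ^ m -
        (betaMap β)^[n] x) / β ^ n := by
    rw [add_sub_cancel_left, div_div, ← pow_add, Function.iterate_add_apply]
  rw [hz_eq, Function.iterate_add_apply, hz_iter]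
  exact ⟨hz, hη_iter⟩

theorem exists_inFullCylinder_ge
    (hfull : ∀ y ∈ Ico (0 : ℝ) 1, ∃ n ≥ 1, InFullCylinder β n y) (hx : x ∈ Ico 0 1) (N : ℕ) :
    ∃ n ≥ N, InFullCylinder β n x := by
  induction N with
  | zero => exact ⟨0, le_rfl, inFullCylinder_zero⟩
  | succ N ih =>
    obtain ⟨n, hNn, hn⟩ := ih
    obtain ⟨m, hm₁, hm⟩ := hfull _ ((mapsTo_betaMap β).iterate n hx)
    exact ⟨m + n, by omega, hn.add hm⟩

theorem InFullCylinder.disjoint_closedBall (hβ : 0 < β) {S : Set ℝ}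
    (hinv : MapsTo (betaMap β) S S) {a b : ℝ} (hab : a < b) (hsub : Ioo a b ⊆ Ico 0 1)
    (hS : Disjoint S (Ioo a b)) {n : ℕ} (hn : InFullCylinder β n x) :
    Disjoint S (Metric.closedBall (x + ((a + b) / 2 - (betaMap β)^[n] x) / β ^ n)
      ((b - a) / 4 / β ^ n)) := by
  rw [Set.disjoint_left]
  intro z hzS hz
  set c := (a + b) / 2 with hc
  set θ := c + β ^ n * (z - (x + (c - (betaMap β)^[n] x) / β ^ n)) with hθ_def
  have hz_eq : z = x + (θ - (betaMap β)^[n] x) / β ^ n := by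
    rw [hθ_def]
    field_simp
    ring
  have hθc : |θ - c| ≤ (b - a) / 4 := by
    rw [Metric.mem_closedBall, Real.dist_eq, le_div_iff₀ (by positivity), mul_comm] at hz
    rwa [hθ_def, add_sub_cancel_left, abs_mul, abs_of_pos (by positivity)]
  have hθ : θ ∈ Ioo a b := by
    rw [abs_le] at hθc
    constructor <;> linarith
  refine Set.disjoint_left.1 hS ?_ hθ
  rw [← (hn θ (hsub hθ)).2, ← hz_eq]
  exact hinv.iterate n hzS

theorem volume_eq_zero_of_mapsTo_betaMap (hβ : 1 < β)
    (hfull : ∀ y ∈ Ico (0 : ℝ) 1, ∃ n ≥ 1, InFullCylinder β n y)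
    {S : Set ℝ} (hS₀₁ : S ⊆ Ico 0 1) (hinv : MapsTo (betaMap β) S S) {a b : ℝ} (hab : a < b)
    (hsub : Ioo a b ⊆ Ico 0 1) (hS : Disjoint S (Ioo a b)) : volume S = 0 := by
  have hβ₀ : 0 < β := by linarith
  refine measure_eq_zero_of_porous (4 / (b - a)) fun x hx ε hε ↦ ?_
  obtain ⟨N, hN⟩ := (((tendsto_pow_atTop_atTop_of_one_lt hβ).const_div_atTop
    ((b - a) / 4)).eventually (gt_mem_nhds hε)).exists_forall_of_atTop
  obtain ⟨n, hNn, hn⟩ := exists_inFullCylinder_ge hfull (hS₀₁ hx) N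
  refine ⟨_, _, ⟨div_pos (by linarith) (by positivity), hN n hNn⟩, ?_,
    hn.disjoint_closedBall hβ₀ hinv hab hsub hS⟩
  have hT := (mapsTo_betaMap β).iterate n (hS₀₁ hx)
  have hmid : (a + b) / 2 ∈ Ico (0 : ℝ) 1 := hsub ⟨by linarith, by linarith⟩
  have hba : b - a ≠ 0 := by linarith
  have radius_eq : 4 / (b - a) * ((b - a) / 4 / β ^ n) = 1 / β ^ n := by field_simp
  rw [radius_eq, Metric.mem_closedBall, Real.dist_eq, sub_add_cancel_left, abs_neg, abs_div,
    abs_of_pos (pow_pos hβ₀ n)]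
  gcongr
  rw [abs_le]
  constructor <;> linarith [hT.1, hT.2, hmid.1, hmid.2]

end FullCylinders

/-- `t` is the quasi-greedy expansion of `1` in base `β`; as for `IsRep`, the digit `t_{j+1}` of the
paper is `t j`. -/
structure IsQuasiGreedy_s17 (β : ℝ) (t : ℕ → ℤ) : Prop where
  digit_mem : ∀ j, t j ∈ Icc 0 ⌊β⌋
  hasSum : HasSum (fun j ↦ (t j : ℝ) / β ^ (j + 1)) 1
  shift_le : ∀ k, 1 ≤ k →
    (∀ j, t (k + j) = t j) ∨ ∃ j, (∀ i < j, t (k + i) = t i) ∧ t (k + j) < t j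
  exists_ne_zero : ∀ N, ∃ j, N ≤ j ∧ t j ≠ 0

/-- The sequence has the form `(m, …, m, p)^ω` with `0 ≤ p < m` and period `d + 1 ≥ 2`; the
quasi-greedy expansion of `1` has this form exactly for confluent bases. -/
def IsConfluentSeq (t : ℕ → ℤ) : Prop :=
  ∃ d, 1 ≤ d ∧ ∃ m p : ℤ, 0 ≤ p ∧ p < m ∧ ∀ j, t j = if (j + 1) % (d + 1) = 0 then p else m

theorem isConfluentSeq_of_periodic {t : ℕ → ℤ} {d : ℕ} {m : ℤ} (hd : 1 ≤ d) (h₀ : 0 ≤ t d)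
    (hm : t d < m) (hhead : ∀ i < d, t i = m) (hper : ∀ j, t (d + 1 + j) = t j) :
    IsConfluentSeq t := by
  refine ⟨d, hd, m, t d, h₀, hm, fun j ↦ ?_⟩
  induction j using Nat.strong_induction_on with
  | _ j ih =>
    rcases lt_trichotomy j d with hj | rfl | hj
    · rw [hhead j hj, if_neg]
      rw [Nat.mod_eq_of_lt (by omega)]
      omega
    · simp
    · obtain ⟨i, rfl⟩ := Nat.exists_eq_add_of_le (Nat.succ_le_of_lt hj)
      rw [Nat.succ_eq_add_one, hper, ih i (by omega), add_assoc (d + 1), Nat.add_mod_left]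

namespace IsQuasiGreedy_s17

variable {β : ℝ} {t : ℕ → ℤ}

theorem digit_nonneg (h : IsQuasiGreedy_s17 β t) (j : ℕ) : 0 ≤ t j := (h.digit_mem j).1

theorem remainder_eq_one_of_shift_eq (hβ : β ≠ 0) (h : IsQuasiGreedy_s17 β t) {k : ℕ}
    (hk : ∀ j, t (k + j) = t j) : remainder β 1 t k = 1 :=
  (hasSum_remainder hβ h.hasSum k).unique (by simpa only [hk] using h.hasSum)

theorem remainder_pos (hβ : 0 < β) (h : IsQuasiGreedy_s17 β t) (k : ℕ) : 0 < remainder β 1 t k := by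
  obtain ⟨j, hkj, hj⟩ := h.exists_ne_zero k
  obtain ⟨i, rfl⟩ := Nat.exists_eq_add_of_le hkj
  have hdigit_nonneg (i : ℕ) : (0 : ℝ) ≤ t (k + i) := mod_cast h.digit_nonneg (k + i)
  have hdigit_pos : (0 : ℝ) < t (k + i) :=
    (hdigit_nonneg i).lt_of_ne (mod_cast hj.symm)
  exact hasSum_lt (fun i ↦ div_nonneg (hdigit_nonneg i) (by positivity))
    (div_pos hdigit_pos (by positivity)) hasSum_zero (hasSum_remainder hβ.ne' h.hasSum k)

theorem pow_mul_remainder_sub_one_lt (hβ : 0 < β) (h : IsQuasiGreedy_s17 β t) {k j : ℕ}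
    (heq : ∀ i < j, t (k + i) = t i) (hlt : t (k + j) < t j) :
    β ^ (j + 1) * (remainder β 1 t k - 1) < remainder β 1 t (k + (j + 1)) - 1 := by
  have hdigit : (t (k + j) : ℝ) + 1 ≤ t j := mod_cast hlt
  have hpos := h.remainder_pos hβ (j + 1)
  have hdiff := remainder_sub_remainder (β := β) (x := remainder β 1 t k) (b := t) 1 j
  rw [remainder] at hpos
  rw [← add_assoc, remainder, remainder_add, remainder_congr heq, pow_succ]
  linarith [congrArg (β * ·) hdiff]

theorem remainder_le_one (hβ : 1 < β) (h : IsQuasiGreedy_s17 β t) (k : ℕ) :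
    remainder β 1 t k ≤ 1 := by
  have hβ₀ : 0 < β := by linarith
  set s := ⨆ k, remainder β 1 t k
  have hbdd : BddAbove (range (remainder β 1 t)) :=
    ⟨_, forall_mem_range.2 (remainder_le hβ (fun i ↦ (h.digit_mem i).2) h.hasSum)⟩
  have hs : 1 ≤ s := le_ciSup hbdd 0
  have contraction (k : ℕ) : remainder β 1 t k ≤ 1 + (s - 1) / β := by
    rcases le_or_gt (remainder β 1 t k) 1 with hk | hk
    · exact hk.trans (le_add_of_nonneg_right (div_nonneg (by linarith) hβ₀.le))
    have hk₀ : 1 ≤ k := Nat.one_le_iff_ne_zero.2 fun hk₀ ↦ by simp [hk₀, remainder] at hk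
    rcases h.shift_le k hk₀ with hshift | ⟨j, heq, hlt⟩
    · exact absurd (h.remainder_eq_one_of_shift_eq hβ₀.ne' hshift) hk.ne'
    rw [← sub_le_iff_le_add', le_div_iff₀' hβ₀]
    calc β * (remainder β 1 t k - 1) ≤ β ^ (j + 1) * (remainder β 1 t k - 1) := by
          gcongr
          exact le_self_pow₀ hβ.le j.succ_ne_zero
      _ ≤ remainder β 1 t (k + (j + 1)) - 1 := (h.pow_mul_remainder_sub_one_lt hβ₀ heq hlt).le
      _ ≤ s - 1 := sub_le_sub_right (le_ciSup hbdd _) 1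
  have hs_le : (s - 1) * β ≤ s - 1 := by
    rw [← le_div_iff₀ hβ₀, sub_le_iff_le_add']
    exact ciSup_le contraction
  exact (le_ciSup hbdd k).trans (by nlinarith)

theorem shift_eq_of_remainder_eq_one (hβ : 1 < β) (h : IsQuasiGreedy_s17 β t) {k : ℕ} (hk : 1 ≤ k)
    (hone : remainder β 1 t k = 1) : ∀ j, t (k + j) = t j := by
  refine (h.shift_le k hk).resolve_right ?_
  rintro ⟨j, heq, hlt⟩
  have := h.pow_mul_remainder_sub_one_lt (by linarith) heq hlt
  rw [hone] at this
  linarith [h.remainder_le_one hβ (k + (j + 1))]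

theorem remainder_mem_Ico (hβ : 1 < β) (h : IsQuasiGreedy_s17 β t) {x : ℝ} (hx : x < 1) {i k : ℕ}
    (hi : i ≤ k) (hk : 0 ≤ remainder β x t k) : remainder β x t i ∈ Ico 0 1 := by
  have hβ₀ : 0 < β := by linarith
  refine ⟨remainder_nonneg_of_le hβ₀ h.digit_nonneg hi hk, ?_⟩
  have hlt : 0 < remainder β 1 t i - remainder β x t i := by
    rw [remainder_sub_remainder]
    exact mul_pos (by positivity) (by linarith)
  linarith [h.remainder_le_one hβ i]

theorem iterate_betaMap_eq_remainder (hβ : 1 < β) (h : IsQuasiGreedy_s17 β t) {x : ℝ} (hx : x < 1)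
    {k : ℕ} (hk : 0 ≤ remainder β x t k) : (betaMap β)^[k] x = remainder β x t k :=
  _root_.iterate_betaMap_eq_remainder fun _ hi ↦ h.remainder_mem_Ico hβ hx hi hk

theorem exists_remainder_nonneg_and_neg (hβ : 1 < β) (h : IsQuasiGreedy_s17 β t) {x : ℝ}
    (hx : x ∈ Ico 0 1) : ∃ k, 0 ≤ remainder β x t k ∧ remainder β x t (k + 1) < 0 := by
  have hex : ∃ k, remainder β x t k < 0 := by
    obtain ⟨k, hk⟩ := pow_unbounded_of_one_lt (1 / (1 - x)) hβ
    rw [div_lt_iff₀ (by linarith [hx.2]), ← remainder_sub_remainder (b := t)] at hk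
    exact ⟨k, by linarith [h.remainder_le_one hβ k]⟩
  by_contra! hcon
  obtain ⟨k, hk⟩ := hex
  exact hk.not_ge (Nat.rec hx.1 hcon k)

theorem exists_inFullCylinder (hβ : 1 < β) (h : IsQuasiGreedy_s17 β t) {x : ℝ} (hx : x ∈ Ico 0 1) :
    ∃ n ≥ 1, InFullCylinder β n x := by
  have hβ₀ : 0 < β := by linarith
  obtain ⟨k, hk, hk_succ⟩ := h.exists_remainder_nonneg_and_neg hβ hx
  refine ⟨k + 1, by omega, fun θ hθ ↦ ?_⟩
  set ρ := remainder β x t k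
  set d := ⌊β * ρ⌋
  have hd₀ : (0 : ℝ) ≤ d := mod_cast Int.floor_nonneg.2 (mul_nonneg hβ₀.le hk)
  have hd : (d : ℝ) + 1 ≤ t k := by
    rw [remainder, sub_neg, ← Int.floor_lt] at hk_succ
    exact_mod_cast hk_succ
  have hx_iter : (betaMap β)^[k + 1] x = β * ρ - d := by
    rw [Function.iterate_succ_apply', h.iterate_betaMap_eq_remainder hβ hx.2 hk]
    rfl
  rw [hx_iter]
  set z := x + (θ - (β * ρ - d)) / β ^ (k + 1) with hz
  have hz_rem : β * remainder β z t k = d + θ := by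
    have hdiff : remainder β z t k - ρ = β ^ k * (z - x) := remainder_sub_remainder x k
    calc β * remainder β z t k = β * ρ + β ^ (k + 1) * (z - x) := by
          rw [pow_succ]
          linear_combination β * hdiff
      _ = d + θ := by
          rw [hz]
          field_simp
          ring
  have hz_nonneg : 0 ≤ remainder β z t k :=
    nonneg_of_mul_nonneg_right (by linarith [hθ.1]) hβ₀
  have hz_lt : z < 1 := by
    have hdiff := remainder_sub_remainder (β := β) (x := z) (b := t) 1 (k + 1)
    have hpos := h.remainder_pos hβ₀ (k + 1)
    rw [remainder, hz_rem] at hdiff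
    by_contra! hz_ge
    have : 0 ≤ β ^ (k + 1) * (z - 1) := mul_nonneg (by positivity) (by linarith)
    linarith [hθ.2]
  refine ⟨h.remainder_mem_Ico hβ hz_lt (Nat.zero_le k) hz_nonneg, ?_⟩
  rw [Function.iterate_succ_apply', h.iterate_betaMap_eq_remainder hβ hz_lt hz_nonneg, betaMap,
    hz_rem, Int.fract_intCast_add]
  exact Int.fract_eq_self.2 hθ

theorem exists_digit_lt (hβ : 1 < β) (h : IsQuasiGreedy_s17 β t) (N : ℕ) :
    ∃ d ≥ N, t d < ⌊β⌋ := by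
  by_contra! hcon
  have hmax (i : ℕ) : t (N + i) = ⌊β⌋ := (h.digit_mem _).2.antisymm (hcon _ (by omega))
  have htail := hasSum_remainder (by linarith) h.hasSum N
  simp only [hmax] at htail
  have hvalue := h.remainder_le_one hβ N
  rw [htail.unique (hasSum_const_digit hβ _), div_le_one (by linarith)] at hvalue
  linarith [Int.lt_floor_add_one β]

theorem zero_digit (hβ : 1 < β) (hβZ : ∀ n : ℤ, β ≠ n) (h : IsQuasiGreedy_s17 β t) :
    t 0 = ⌊β⌋ := by
  refine (h.digit_mem 0).2.antisymm (Int.lt_add_one_iff.1 ?_)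
  have hfirst : β * 1 - t 0 ≤ 1 := h.remainder_le_one hβ 1
  have hfloor : (⌊β⌋ : ℝ) < β := (Int.floor_le β).lt_of_ne (hβZ _).symm
  exact_mod_cast (show (⌊β⌋ : ℝ) < t 0 + 1 by linarith)

theorem exists_remainder_ne_one (hβ : 1 < β) (hβZ : ∀ n : ℤ, β ≠ n) (h : IsQuasiGreedy_s17 β t)
    (ht : ¬ IsConfluentSeq t) : ∃ d, t d < ⌊β⌋ ∧ remainder β 1 t (d + 1) ≠ 1 := by
  classical
  have hex : ∃ d, t d < ⌊β⌋ := let ⟨d, _, hd⟩ := h.exists_digit_lt hβ 0; ⟨d, hd⟩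
  have hd := Nat.find_spec hex
  have hhead (i : ℕ) (hi : i < Nat.find hex) : t i = ⌊β⌋ :=
    (h.digit_mem i).2.antisymm (not_lt.1 (Nat.find_min hex hi))
  have hd₁ : 1 ≤ Nat.find hex := Nat.one_le_iff_ne_zero.2 fun hd₀ ↦
    (hd₀ ▸ hd).ne (h.zero_digit hβ hβZ)
  exact ⟨_, hd, fun hone ↦ ht <| isConfluentSeq_of_periodic hd₁ (h.digit_nonneg _) hd hhead
    (h.shift_eq_of_remainder_eq_one hβ (by omega) hone)⟩

theorem exists_remainder_lt_one_ge (hβ : 1 < β) (hβZ : ∀ n : ℤ, β ≠ n) (h : IsQuasiGreedy_s17 β t)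
    (ht : ¬ IsConfluentSeq t) (N : ℕ) :
    ∃ d ≥ N, t d < ⌊β⌋ ∧ remainder β 1 t (d + 1) < 1 := by
  by_cases hper : ∃ p ≥ 1, remainder β 1 t p = 1
  · obtain ⟨p, hp₁, hp⟩ := hper
    obtain ⟨d, hd, hne⟩ := h.exists_remainder_ne_one hβ hβZ ht
    have hshift := h.shift_eq_of_remainder_eq_one hβ hp₁ hp
    have periodic (n : ℕ) :
        t (p * n + d) = t d ∧ remainder β 1 t (p * n + d + 1) = remainder β 1 t (d + 1) := by
      induction n with
      | zero => simp
      | succ n ih =>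
        rw [mul_add_one, add_comm _ p, add_assoc, add_assoc, hshift, remainder_add, hp]
        simpa only [hshift] using ih
    exact ⟨p * N + d, by nlinarith, (periodic N).1.trans_lt hd,
      (periodic N).2.trans_lt ((h.remainder_le_one hβ _).lt_of_ne hne)⟩
  · push Not at hper
    obtain ⟨d, hNd, hd⟩ := h.exists_digit_lt hβ N
    exact ⟨d, hNd, hd, (h.remainder_le_one hβ _).lt_of_ne (hper _ (by omega))⟩

theorem exists_digits_remainder_eq (h : IsQuasiGreedy_s17 β t) {d : ℕ} (hd : t d < ⌊β⌋) (x : ℝ) :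
    ∃ b : ℕ → ℤ, (∀ i, b i ∈ Icc 0 ⌊β⌋) ∧ remainder β x b (1 + (d + 1)) =
      β ^ (d + 1) * (β * x - 1) - (1 - remainder β 1 t (d + 1)) := by
  let b : ℕ → ℤ
    | 0 => 0
    | i + 1 => Function.update t d (t d + 1) i
  refine ⟨b, fun i ↦ ?_, ?_⟩
  · rcases i with _ | i
    · exact ⟨le_rfl, (h.digit_nonneg 0).trans (h.digit_mem 0).2⟩
    rcases eq_or_ne i d with rfl | hi
    · simpa [b] using ⟨by linarith [h.digit_nonneg i], hd⟩
    · simpa [b, hi] using h.digit_mem i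
  · have hhead : remainder β (β * x) (fun i ↦ b (1 + i)) d = remainder β (β * x) t d :=
      remainder_congr fun i hi ↦ by simp [b, add_comm 1 i, hi.ne]
    have hdiff := remainder_sub_remainder (β := β) (x := β * x) (b := t) 1 (d + 1)
    rw [remainder] at hdiff
    rw [remainder_one_add, show b 0 = 0 from rfl, Int.cast_zero, sub_zero, remainder, hhead]
    simp only [b, add_comm 1 d, Function.update_self, Int.cast_add, Int.cast_one]
    linarith

theorem notMem_greedyOptimalSet (hβ : 1 < β) (h : IsQuasiGreedy_s17 β t) {d : ℕ} (hd : t d < ⌊β⌋)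
    (hlt : remainder β 1 t (d + 1) < 1) {x : ℝ}
    (hx : β ^ (d + 1) * (β * x - 1) ∈ Ioo (1 - remainder β 1 t (d + 1)) 1) :
    x ∉ greedyOptimalSet β := by
  rintro ⟨-, hx_best⟩
  obtain ⟨b, hb, hb_rem⟩ := h.exists_digits_remainder_eq hd x
  have hpow : 1 ≤ β ^ (d + 1) := one_le_pow₀ hβ.le
  have hy : 0 < β * x - 1 := pos_of_mul_pos_right ((sub_pos.2 hlt).trans hx.1) (by positivity)
  have hy_lt : β * x - 1 < 1 := (le_mul_of_one_le_left hy.le hpow).trans_lt hx.2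
  have hT : betaMap β x = β * x - 1 :=
    Int.fract_eq_iff.2 ⟨hy.le, hy_lt, 1, by simp⟩
  have hT_iter : (betaMap β)^[1 + (d + 1)] x = β ^ (d + 1) * (β * x - 1) := by
    rw [add_comm 1, Function.iterate_succ_apply, hT, iterate_betaMap_eq_pow_mul hβ.le hy.le hx.2]
  have hle := hx_best b hb (1 + (d + 1)) (by rw [hb_rem]; constructor <;> linarith [hx.1, hx.2])
  rw [hT_iter, hb_rem] at hle
  linarith

theorem exists_Ioo_disjoint_greedyOptimalSet (hβ : 1 < β) (hβZ : ∀ n : ℤ, β ≠ n)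
    (h : IsQuasiGreedy_s17 β t) (ht : ¬ IsConfluentSeq t) :
    ∃ a b, a < b ∧ Ioo a b ⊆ Ico 0 1 ∧ Disjoint (greedyOptimalSet β) (Ioo a b) := by
  have hβ₀ : 0 < β := by linarith
  obtain ⟨N, hN⟩ := pow_unbounded_of_one_lt (1 / (β - 1)) hβ
  obtain ⟨d, hNd, hd, hlt⟩ := h.exists_remainder_lt_one_ge hβ hβZ ht N
  set r := remainder β 1 t (d + 1)
  have hr : 0 < r := h.remainder_pos hβ₀ (d + 1)
  have hpow : 1 / β ^ (d + 1) < β - 1 :=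
    (one_div_lt (by linarith) (by positivity)).1 <|
      hN.trans_le (pow_le_pow_right₀ hβ.le (by omega))
  -- `x` is between the chosen endpoints iff `β ^ (d + 1) * (β * x - 1) ∈ Ioo (1 - r) 1`.
  refine ⟨(1 + (1 - r) / β ^ (d + 1)) / β, (1 + 1 / β ^ (d + 1)) / β, by gcongr; linarith,
    fun x hx ↦ ⟨?_, ?_⟩, Set.disjoint_left.2 fun x hxS hx ↦ ?_⟩
  · exact (div_nonneg (add_nonneg zero_le_one (div_nonneg (by linarith) (by positivity)))
      hβ₀.le).trans hx.1.le
  · exact hx.2.trans ((div_lt_one hβ₀).2 (by linarith))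
  · rw [mem_Ioo, div_lt_iff₀' hβ₀, lt_div_iff₀' hβ₀, ← lt_sub_iff_add_lt', ← sub_lt_iff_lt_add',
      div_lt_iff₀' (by positivity), lt_div_iff₀' (by positivity)] at hx
    exact h.notMem_greedyOptimalSet hβ hd hlt hx hxS

end IsQuasiGreedy_s17

/-- let `β > 1`, `β ∉ ℤ`, `A = {0,…,⌊β⌋}`, and let `(t_j)` be the
quasi-greedy expansion of `1` in base `β` (digits in `A`, `∑ t_j/β^j = 1`, every shift
lexicographically `≤ (t_j)`, not eventually zero). If `(t_j)` is not of the form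
`(m,…,m,p)^ω` with `0 ≤ p < m` (i.e. `β` is not confluent), then the set of `x ∈ [0,1)`
possessing an optimal `(β,A)`-representation has Lebesgue measure zero.
(`t` is 0-indexed: `t j` is the digit `t_{j+1}`.) -/
theorem almost_no_optimal_rep_nonconfluent
    (β : ℝ) (hβ : 1 < β) (hβZ : ∀ n : ℤ, β ≠ n)
    (t : ℕ → ℤ) (ht : ∀ j, 0 ≤ t j ∧ t j ≤ ⌊β⌋)
    (hsum : HasSum (fun j : ℕ => (t j : ℝ) / β ^ (j + 1)) 1)
    (hshift : ∀ k : ℕ, 1 ≤ k →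
      (∀ j, t (k + j) = t j) ∨ ∃ j, (∀ i < j, t (k + i) = t i) ∧ t (k + j) < t j)
    (hnev0 : ∀ N : ℕ, ∃ j, N ≤ j ∧ t j ≠ 0)
    (hnonconfluent : ¬ ∃ d : ℕ, 1 ≤ d ∧ ∃ m p : ℤ, 0 ≤ p ∧ p < m ∧
      ∀ j : ℕ, t j = if (j + 1) % (d + 1) = 0 then p else m) :
    MeasureTheory.volume
      {x : ℝ | x ∈ Set.Ico (0 : ℝ) 1 ∧
        ∃ c : ℕ → ℝ, IsOptimalRep β (digitSet ⌊β⌋) c x} = 0 := by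
  have h : IsQuasiGreedy_s17 β t := ⟨ht, hsum, hshift, hnev0⟩
  obtain ⟨a, b, hab, hsub, hdisj⟩ := h.exists_Ioo_disjoint_greedyOptimalSet hβ hβZ hnonconfluent
  have volume_greedyOptimalSet : volume (greedyOptimalSet β) = 0 :=
    volume_eq_zero_of_mapsTo_betaMap hβ (fun y hy ↦ h.exists_inFullCylinder hβ hy)
      (fun x hx ↦ hx.1) (mapsTo_betaMap_greedyOptimalSet (by linarith)) hab hsub hdisj
  exact measure_mono_null
    (fun x ⟨hx, c, hc⟩ ↦ mem_greedyOptimalSet_of_isOptimalRep hβ hx hc) volume_greedyOptimalSet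
end
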